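/- arXiv:1401.3714 — 3 statements merged into one kernel-verified Lean document; each statement's English description precedes it below -/
import Mathlib

section
/- Let F be a field, f ∈ F[x₁,…,xₙ] of degree d with char F = 0 or char F > d, and a ∈ Fⁿ. Then for every 1 ≤ i ≤ d, the first-order directional derivative of the degree-i homogeneous component of f in direction a equals the degree-(i−1) homogeneous component of the shifted component: f_i^{(1)}(a,x) = H^{i−1}(H^i(f)(x+a)). Consequently, the first-order directional derivative of f itself satisfies f^{(1)}(a,x) = Σ_{i=1}^{d} H^{i−1}(H^i(f)(x+a)). -/
/-!
The operator `dirDeriv a 1` is the derivation `D = ∑ t, a t • ∂/∂x_t`. For a monomial `p` of degree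
`m`, the Taylor expansion `p(x + a) = p + D p + (terms of degree at most m - 2)` holds over every
commutative ring, by induction on the monomial: multiplying it by `x_i + a_i` gives the expansion
of `x_i * p` because `D (x_i * p) = x_i * D p + a_i * p` (`hasFirstOrderExpansion_X_mul`). Since
`D p` is homogeneous of degree `m - 1`, it is the degree `m - 1` component of the shift, and
linearity passes from monomials to all homogeneous components. The formula for `f` follows by
summing over its components, the degree `0` one being killed by `D`.
-/

open MvPolynomial

/-- Shift of a multivariate polynomial: `shift a f = f(x + a)`. -/
noncomputable def shift {F : Type*} [CommRing F] {n : ℕ} (a : Fin n → F)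
    (f : MvPolynomial (Fin n) F) : MvPolynomial (Fin n) F :=
  aeval (fun i => X i + C (a i)) f

/-- Iterated partial derivative `∂^r f / (∂x_{e 1} ⋯ ∂x_{e r})`. -/
noncomputable def pderivMulti {F : Type*} [CommRing F] {n r : ℕ} (e : Fin r → Fin n)
    (f : MvPolynomial (Fin n) F) : MvPolynomial (Fin n) F :=
  (List.ofFn e).foldl (fun p i => pderiv i p) f

/-- Order-`r` directional derivative of `f` in direction `a`:
`∑_{e ∈ [n]^r} (∏_k a_{e k}) • ∂^r f/(∂x_{e 1} ⋯ ∂x_{e r})`. -/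
noncomputable def dirDeriv {F : Type*} [CommRing F] {n : ℕ} (a : Fin n → F) (r : ℕ)
    (f : MvPolynomial (Fin n) F) : MvPolynomial (Fin n) F :=
  ∑ e : Fin r → Fin n, (∏ k, a (e k)) • pderivMulti e f

theorem dirDeriv_one_eq {F : Type*} [CommRing F] {n : ℕ} (a : Fin n → F)
    (f : MvPolynomial (Fin n) F) : dirDeriv a 1 f = ∑ t, a t • pderiv t f := by
  unfold dirDeriv pderivMulti
  exact Fintype.sum_equiv (Equiv.funUnique (Fin 1) (Fin n)) _ _ (fun e => by simp)

theorem dirDeriv_one_add {F : Type*} [CommRing F] {n : ℕ} (a : Fin n → F)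
    (f g : MvPolynomial (Fin n) F) :
    dirDeriv a 1 (f + g) = dirDeriv a 1 f + dirDeriv a 1 g := by
  simp [dirDeriv_one_eq, Finset.sum_add_distrib]

theorem dirDeriv_one_C {F : Type*} [CommRing F] {n : ℕ} (a : Fin n → F) (c : F) :
    dirDeriv a 1 (C c) = 0 := by
  simp [dirDeriv_one_eq]

theorem dirDeriv_one_sum {F : Type*} [CommRing F] {n : ℕ} (a : Fin n → F) {ι : Type*}
    (s : Finset ι) (f : ι → MvPolynomial (Fin n) F) :
    dirDeriv a 1 (∑ i ∈ s, f i) = ∑ i ∈ s, dirDeriv a 1 (f i) := by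
  simp only [dirDeriv_one_eq, map_sum, Finset.smul_sum]
  exact Finset.sum_comm

theorem dirDeriv_one_X_mul {F : Type*} [CommRing F] {n : ℕ} (a : Fin n → F) (i : Fin n)
    (p : MvPolynomial (Fin n) F) :
    dirDeriv a 1 (X i * p) = X i * dirDeriv a 1 p + C (a i) * p := by
  classical
  simp only [dirDeriv_one_eq, pderiv_mul, smul_add, Finset.sum_add_distrib, pderiv_X,
    Finset.mul_sum, smul_eq_C_mul]
  rw [add_comm]
  congr 1
  · exact Finset.sum_congr rfl fun _ _ => by ring
  · rw [Finset.sum_eq_single i]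
    · simp
    · intro b _ hb
      simp [hb.symm]
    · simp

/-- Multiplication by a variable raises by one the degrees in which a polynomial has no terms; `P`
is the set of those degrees for the product. -/
theorem coeff_X_mul_eq_zero {F : Type*} [CommRing F] {n : ℕ} (P : ℕ → Prop)
    {p : MvPolynomial (Fin n) F} (hp : ∀ e : Fin n →₀ ℕ, P (e.degree + 1) → coeff e p = 0)
    (i : Fin n) (e : Fin n →₀ ℕ) (he : P e.degree) : coeff e (X i * p) = 0 := by
  classical
  rw [mul_comm, coeff_mul_X']
  split_ifs with h
  · apply hp
    have h1 : e - Finsupp.single i 1 + Finsupp.single i 1 = e :=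
      tsub_add_cancel_of_le (by
        rw [Finsupp.single_le_iff]
        exact Nat.one_le_iff_ne_zero.mpr (Finsupp.mem_support_iff.mp h))
    have h2 := congrArg Finsupp.degree h1
    rw [map_add, Finsupp.degree_single] at h2
    rwa [h2]
  · rfl

/-- `p` is homogeneous of degree `m`, and `p(x + a) = p + D p + r` with `D p` homogeneous of degree
`m - 1` and `r` of degree at most `m - 2`. The degree conditions are written additively, so that
`D p = 0` when `m = 0` and `r = 0` when `m ≤ 1`. -/
def HasFirstOrderExpansion {F : Type*} [CommRing F] {n : ℕ} (a : Fin n → F) (m : ℕ)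
    (p : MvPolynomial (Fin n) F) : Prop :=
  (∀ e : Fin n →₀ ℕ, e.degree ≠ m → coeff e p = 0) ∧
  (∀ e : Fin n →₀ ℕ, e.degree + 1 ≠ m → coeff e (dirDeriv a 1 p) = 0) ∧
  ∃ r, shift a p = p + dirDeriv a 1 p + r ∧ ∀ e : Fin n →₀ ℕ, m < e.degree + 2 → coeff e r = 0

theorem hasFirstOrderExpansion_C {F : Type*} [CommRing F] {n : ℕ} (a : Fin n → F) (c : F) :
    HasFirstOrderExpansion a 0 (C c) := by
  classical
  refine ⟨fun e he => ?_, fun e _ => by simp [dirDeriv_one_C], 0, ?_, by simp⟩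
  · rw [coeff_C, if_neg]
    rintro rfl
    simp at he
  · simp [shift, dirDeriv_one_C, algebraMap_eq]

/-- If `p(x + a) = p + D p + r`, then `x_i * p` has remainder `a_i * D p + (x_i + a_i) * r`. -/
theorem hasFirstOrderExpansion_X_mul {F : Type*} [CommRing F] {n : ℕ} (a : Fin n → F) (m : ℕ)
    (p : MvPolynomial (Fin n) F) (i : Fin n) (h : HasFirstOrderExpansion a m p) :
    HasFirstOrderExpansion a (m + 1) (X i * p) := by
  obtain ⟨h1, h2, r, hr, h3⟩ := h
  refine ⟨fun e he => ?_, fun e he => ?_, C (a i) * dirDeriv a 1 p + (X i * r + C (a i) * r), ?_,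
    fun e he => ?_⟩
  · exact coeff_X_mul_eq_zero (fun k => k ≠ m + 1) (fun e he => h1 e (by omega)) i e he
  · rw [dirDeriv_one_X_mul, coeff_add, coeff_C_mul, h1 e (by omega),
      coeff_X_mul_eq_zero (fun k => k + 1 ≠ m + 1) (fun e he => h2 e (by omega)) i e he]
    simp
  · have : shift a (X i * p) = (X i + C (a i)) * shift a p := by simp [shift]
    rw [this, hr, dirDeriv_one_X_mul]
    ring
  · rw [coeff_add, coeff_add, coeff_C_mul, coeff_C_mul, h2 e (by omega), h3 e (by omega),
      coeff_X_mul_eq_zero (fun k => m + 1 < k + 2) (fun e he => h3 e (by omega)) i e he]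
    simp

theorem hasFirstOrderExpansion_monomial {F : Type*} [CommRing F] {n : ℕ} (a : Fin n → F)
    (s : Fin n →₀ ℕ) (c : F) : HasFirstOrderExpansion a s.degree (monomial s c) := by
  obtain ⟨m, hm⟩ : ∃ m, HasFirstOrderExpansion a m (monomial s c) := by
    refine induction_on_monomial (motive := fun p => ∃ m, HasFirstOrderExpansion a m p)
      (fun c => ⟨0, hasFirstOrderExpansion_C a c⟩) (fun p i ⟨m, h⟩ => ⟨m + 1, ?_⟩) s c
    rw [mul_comm]
    exact hasFirstOrderExpansion_X_mul a m p i h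
  by_cases h : s.degree = m
  · rwa [h]
  ·
    -- A degree other than `s.degree` is possible only for the zero monomial.
    have hc : c = 0 := by simpa using hm.1 s h
    subst hc
    refine ⟨by simp, by simp [dirDeriv_one_eq], 0, by simp [shift, dirDeriv_one_eq], by simp⟩

/-- In degree `m - 1`, neither `p` nor the remainder contributes to the expansion of `p(x + a)`. -/
theorem HasFirstOrderExpansion.dirDeriv_eq {F : Type*} [CommRing F] {n : ℕ} {a : Fin n → F}
    {m : ℕ} (hm : 1 ≤ m) {p : MvPolynomial (Fin n) F} (h : HasFirstOrderExpansion a m p) :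
    dirDeriv a 1 p = homogeneousComponent (m - 1) (shift a p) := by
  classical
  obtain ⟨h1, h2, r, hr, h3⟩ := h
  ext e
  rw [coeff_homogeneousComponent, hr, coeff_add, coeff_add]
  split_ifs with he
  · rw [h1 e (by omega), h3 e (by omega)]
    simp
  · exact h2 e (by omega)

theorem dirDeriv_one_component_eq {F : Type*} [CommRing F] {n : ℕ} (a : Fin n → F)
    (f : MvPolynomial (Fin n) F) (i : ℕ) (hi : 1 ≤ i) :
    dirDeriv a 1 (homogeneousComponent i f) =
      homogeneousComponent (i - 1) (shift a (homogeneousComponent i f)) := by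
  induction f using MvPolynomial.induction_on' with
  | monomial s c =>
    rw [homogeneousComponent_of_mem (isHomogeneous_monomial c rfl)]
    split_ifs with h
    · subst h
      exact (hasFirstOrderExpansion_monomial a s c).dirDeriv_eq hi
    · simp [dirDeriv_one_eq, shift]
  | add p q hp hq =>
    have hs : ∀ u v : MvPolynomial (Fin n) F, shift a (u + v) = shift a u + shift a v :=
      fun u v => map_add _ u v
    rw [map_add, dirDeriv_one_add, hp, hq, hs, map_add]

/-- For `f` of degree `d` (char `0` or `> d`), the first-order directional derivative of the
degree-`i` homogeneous component equals `H^{i-1}(H^i(f)(x+a))`; consequently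
`f^{(1)}(a,x) = ∑_{i=1}^d H^{i-1}(H^i(f)(x+a))`. -/
theorem dirDeriv_one_homogeneousComponent
    {F : Type*} [Field F] {n : ℕ} (f : MvPolynomial (Fin n) F) (d : ℕ)
    (hdeg : f.totalDegree = d) (hchar : ringChar F = 0 ∨ d < ringChar F)
    (a : Fin n → F) :
    (∀ i, 1 ≤ i → i ≤ d →
      dirDeriv a 1 (homogeneousComponent i f) =
        homogeneousComponent (i - 1) (shift a (homogeneousComponent i f))) ∧
    dirDeriv a 1 f =
      ∑ i ∈ Finset.Icc 1 d,
        homogeneousComponent (i - 1) (shift a (homogeneousComponent i f)) := by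
  refine ⟨fun i hi _ => dirDeriv_one_component_eq a f i hi, ?_⟩
  conv_lhs => rw [← sum_homogeneousComponent f, hdeg]
  rw [dirDeriv_one_sum, Finset.sum_range_succ', homogeneousComponent_zero, dirDeriv_one_C, add_zero,
    ← Finset.Ico_add_one_right_eq_Icc, Finset.sum_Ico_eq_sum_range]
  refine Finset.sum_congr (by simp) fun i _ => ?_
  rw [add_comm 1 i]
  exact dirDeriv_one_component_eq a f (i + 1) (by omega)
end

section
/- Let F be a field and f ∈ F[x₁,…,xₙ] a polynomial of degree d, where char F = 0 or char F > d. Then the kernel S_f = { a ∈ Fⁿ : f(x+a) = f(x) } is a linear subspace of Fⁿ: it contains 0, is closed under addition, and is closed under multiplication by arbitrary scalars t ∈ F. -/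
/-!
Shifts compose additively, so the kernel is closed under addition and, with `a`, contains every
natural multiple `k • a`. For scalars, consider `G(T) = f(x + T a)` as a polynomial in `T` over
the domain `F[x]`: its degree in `T` is at most `d`, and `G(k) = f` at the points `k = 0, …, d`.
The characteristic hypothesis makes these `d + 1` points distinct in `F`, so `G - f` has more
roots than its degree and vanishes identically; evaluating at `T = t` gives closure under scalars.
-/


open MvPolynomial

lemma shift_zero_left {F : Type*} [Field F] {n : ℕ} (f : MvPolynomial (Fin n) F) :
    shift (0 : Fin n → F) f = f := by
  simp [shift]

lemma shift_shift {F : Type*} [Field F] {n : ℕ} (a b : Fin n → F)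
    (f : MvPolynomial (Fin n) F) : shift a (shift b f) = shift (a + b) f := by
  unfold shift
  rw [← AlgHom.comp_apply]
  congr 1
  ext1 i
  simp [add_assoc]

/-- The polynomial `f(x + T a)` in the variable `T` over `F[x]`. The coefficients of `f` are first
moved to `F[x]`, so that `f` becomes a polynomial over the base ring of `F[x][T]`. -/
noncomputable def shiftLine {F : Type*} [Field F] {n : ℕ} (a : Fin n → F)
    (f : MvPolynomial (Fin n) F) : Polynomial (MvPolynomial (Fin n) F) :=
  aeval (fun i => Polynomial.C (X i) + Polynomial.C (C (a i)) * Polynomial.X)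
    (map (C : F →+* MvPolynomial (Fin n) F) f)

lemma eval_shiftLine {F : Type*} [Field F] {n : ℕ} (a : Fin n → F)
    (f : MvPolynomial (Fin n) F) (t : F) :
    (shiftLine a f).eval (C t) = shift (t • a) f := by
  unfold shiftLine shift
  induction f using MvPolynomial.induction_on with
  | C c => simp
  | add p q hp hq => simp only [map_add, Polynomial.eval_add, hp, hq]
  | mul_X p i hp =>
    simp only [map_mul, Polynomial.eval_mul, hp, map_X, aeval_X]
    simp [mul_comm (C (a i)) (C t)]

lemma natDegree_shiftLine_le {F : Type*} [Field F] {n : ℕ} (a : Fin n → F)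
    (f : MvPolynomial (Fin n) F) : (shiftLine a f).natDegree ≤ f.totalDegree := by
  have h := aeval_natDegree_le (map (C : F →+* MvPolynomial (Fin n) F) f)
    (m := f.totalDegree) (Finset.sup_mono (support_map_subset _ _))
    (fun i => Polynomial.C (X i) + Polynomial.C (C (a i)) * Polynomial.X) (n := 1)
    (fun i => by compute_degree)
  simpa [shiftLine] using h

/-- In characteristic `0` or `> d`, the integers `0, …, d` are distinct in `F`. -/
lemma natCast_fin_injective {F : Type*} [Field F] {d : ℕ}
    (hchar : ringChar F = 0 ∨ d < ringChar F) :
    Function.Injective (fun k : Fin (d + 1) => ((k : ℕ) : F)) := by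
  intro i j hij
  have h := (CharP.natCast_eq_natCast F (ringChar F)).1 hij
  apply Fin.ext
  rcases hchar with h0 | hd
  · rw [h0] at h
    exact Nat.modEq_zero_iff.1 h
  · exact h.eq_of_lt_of_lt (by omega) (by omega)

lemma shift_natCast_smul {F : Type*} [Field F] {n : ℕ} {a : Fin n → F}
    {f : MvPolynomial (Fin n) F} (ha : shift a f = f) (k : ℕ) :
    shift ((k : F) • a) f = f := by
  induction k with
  | zero => simpa using shift_zero_left f
  | succ k ih => rw [Nat.cast_succ, add_smul, one_smul, ← shift_shift, ha, ih]

/-- The kernel `S_f = {a | f(x+a) = f(x)}` of a degree-`d` polynomial over a field of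
characteristic `0` or `> d` is a linear subspace of `Fⁿ`. -/
theorem kernel_is_subspace
    {F : Type*} [Field F] {n : ℕ} (f : MvPolynomial (Fin n) F) (d : ℕ)
    (hdeg : f.totalDegree = d) (hchar : ringChar F = 0 ∨ d < ringChar F) :
    shift (0 : Fin n → F) f = f ∧
    (∀ a b : Fin n → F, shift a f = f → shift b f = f → shift (a + b) f = f) ∧
    (∀ (t : F) (a : Fin n → F), shift a f = f → shift (t • a) f = f) := by
  refine ⟨shift_zero_left f, fun a b ha hb => by rw [← shift_shift, hb, ha], fun t a ha => ?_⟩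
  have hG : shiftLine a f - Polynomial.C f = 0 := by
    refine Polynomial.eq_zero_of_natDegree_lt_card_of_eval_eq_zero _
      (f := fun k : Fin (d + 1) => (C ((k : ℕ) : F) : MvPolynomial (Fin n) F))
      ((C_injective (Fin n) F).comp (natCast_fin_injective hchar)) (fun k => ?_) ?_
    · rw [Polynomial.eval_sub, eval_shiftLine, Polynomial.eval_C, shift_natCast_smul ha, sub_self]
    · rw [Polynomial.natDegree_sub_C, Fintype.card_fin, ← hdeg]
      exact Nat.lt_succ_of_le (natDegree_shiftLine_le a f)
  rw [← eval_shiftLine, sub_eq_zero.1 hG, Polynomial.eval_C]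
end

section
/- Let F be a field of characteristic zero and f, g ∈ F[x₁,…,xₙ]. Then the set of shift-equivalences satisfies the relation S_{f,g} = (⋂_{i=1}^n S_{∂f/∂x_i, ∂g/∂x_i}) ∩ { a ∈ Fⁿ : f(a) = g(0) }, where S_{p,q} := { a ∈ Fⁿ : p(x+a) = q(x) as formal polynomials }. -/
/-!
The shift by `a` commutes with every `∂/∂xᵢ` and its value at `0` is `f(a)`, so
`shift a f = g` is the assertion that two polynomials agree, while the right-hand side says that
they have the same first partial derivatives and the same constant term. These are equivalent in
characteristic zero, because a polynomial with vanishing partial derivatives is constant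
(`eq_of_pderiv_eq`): the coefficient of `x^m` in `∂p/∂xᵢ` is `mᵢ + 1` times the coefficient of
`x^m xᵢ` in `p`.
-/

open MvPolynomial

/-- Chain rule for translations: shifting commutes with partial differentiation. -/
theorem pderiv_shift {F : Type*} [CommRing F] {n : ℕ} (a : Fin n → F) (i : Fin n)
    (f : MvPolynomial (Fin n) F) : pderiv i (shift a f) = shift a (pderiv i f) := by
  classical
  unfold shift
  induction f using MvPolynomial.induction_on with
  | C r => simp [algebraMap_eq]
  | add p q hp hq => simp only [map_add, hp, hq]
  | mul_X p j hp =>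
    simp only [map_mul, Derivation.leibniz, map_add, hp, smul_eq_mul, aeval_X, pderiv_X,
      pderiv_C, add_zero]
    by_cases h : j = i
    · subst h; simp
    · simp [Pi.single_eq_of_ne h]

theorem eval_zero_shift {F : Type*} [CommRing F] {n : ℕ} (a : Fin n → F)
    (f : MvPolynomial (Fin n) F) : eval 0 (shift a f) = eval a f := by
  unfold shift
  induction f using MvPolynomial.induction_on with
  | C r => simp [algebraMap_eq]
  | add p q hp hq => simp only [map_add, hp, hq]
  | mul_X p j hp => simp only [map_mul, hp]; simp

/-- In characteristic zero a polynomial is determined by its gradient and its value at `0`. -/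
theorem eq_of_pderiv_eq {F : Type*} [Field F] [CharZero F] {n : ℕ}
    {p q : MvPolynomial (Fin n) F} (h : ∀ i, pderiv i p = pderiv i q)
    (h0 : eval (0 : Fin n → F) p = eval 0 q) : p = q := by
  ext m
  by_cases hm : m = 0
  · subst hm
    simpa [← constantCoeff_eq, eval_zero] using h0
  · obtain ⟨i, hi⟩ := Finsupp.ne_iff.mp hm
    have hm' : m - Finsupp.single i 1 + Finsupp.single i 1 = m :=
      tsub_add_cancel_of_le (by
        rw [Finsupp.single_le_iff]; exact Nat.one_le_iff_ne_zero.mpr hi)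
    have hc := congrArg (coeff (m - Finsupp.single i 1)) (h i)
    rw [coeff_pderiv, coeff_pderiv, hm'] at hc
    exact mul_right_cancel₀ (Nat.cast_add_one_ne_zero _) hc

/-- Grigoriev's recursive relation: over a field of characteristic zero,
`S_{f,g} = (⋂_i S_{∂f/∂x_i, ∂g/∂x_i}) ∩ {a | f(a) = g(0)}`. -/
theorem shiftEquivalences_eq_inter_pderiv
    {F : Type*} [Field F] [CharZero F] {n : ℕ} (f g : MvPolynomial (Fin n) F) :
    {a : Fin n → F | shift a f = g} =
      (⋂ i : Fin n, {a : Fin n → F | shift a (pderiv i f) = pderiv i g}) ∩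
        {a : Fin n → F | eval a f = eval (0 : Fin n → F) g} := by
  ext a
  simp only [Set.mem_ofPred_eq, Set.mem_inter_iff, Set.mem_iInter]
  constructor
  · rintro rfl
    exact ⟨fun i => (pderiv_shift a i f).symm, (eval_zero_shift a f).symm⟩
  · rintro ⟨h, h0⟩
    exact eq_of_pderiv_eq (fun i => (pderiv_shift a i f).trans (h i))
      ((eval_zero_shift a f).trans h0)
end
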